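/- arXiv:1210.8413 — 2 statements merged into one kernel-verified Lean document; each statement's English description precedes it below -/
import Mathlib

section
/- Let K be a field and a, b, p, c, d, q ∈ Kˣ. Assume a ≠ 1, b ≠ 1, ab ≠ 1, p² ≠ 1, pa ≠ 1, pb⁻¹ ≠ 1, pa² ≠ 1, p⁻¹b² ≠ 1, and likewise c ≠ 1, d ≠ 1, cd ≠ 1, q² ≠ 1, qc ≠ 1, qd⁻¹ ≠ 1, qc² ≠ 1, q⁻¹d² ≠ 1. If R(a,b,p,1) and R(c,d,q,1) are isomorphic as K-algebras, then (a,b,p) equals one of the following triples: (c,d,q), (q⁻¹c⁻¹, qd⁻¹, q), (d, c, q⁻¹), or (qd⁻¹, q⁻¹c⁻¹, q⁻¹). -/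
/-- The defining relations of Jordan's ambiskew polynomial ring `R(a,b,p₁,p₂)`,
with generators `x₁ = ι 0`, `x₂ = ι 1`, `x₃ = ι 2`, `x₄ = ι 3`:
`x₄x₁ = a·x₁x₄`, `x₂x₁ = p₁⁻¹a⁻¹·x₁x₂`, `x₁x₃ = p₁·x₃x₁`, `x₄x₃ = b·x₃x₄`,
`x₂x₃ = p₁b⁻¹·x₃x₂`, `x₂x₄ = p₂·x₄x₂ + (1 - p₂ab)·x₁x₃`. -/
inductive AmbRel (K : Type*) [Field K] (a b p₁ p₂ : K) :
    FreeAlgebra K (Fin 4) → FreeAlgebra K (Fin 4) → Prop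
  | r41 : AmbRel K a b p₁ p₂ (FreeAlgebra.ι K 3 * FreeAlgebra.ι K 0)
      (a • (FreeAlgebra.ι K 0 * FreeAlgebra.ι K 3))
  | r21 : AmbRel K a b p₁ p₂ (FreeAlgebra.ι K 1 * FreeAlgebra.ι K 0)
      ((p₁⁻¹ * a⁻¹) • (FreeAlgebra.ι K 0 * FreeAlgebra.ι K 1))
  | r13 : AmbRel K a b p₁ p₂ (FreeAlgebra.ι K 0 * FreeAlgebra.ι K 2)
      (p₁ • (FreeAlgebra.ι K 2 * FreeAlgebra.ι K 0))
  | r43 : AmbRel K a b p₁ p₂ (FreeAlgebra.ι K 3 * FreeAlgebra.ι K 2)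
      (b • (FreeAlgebra.ι K 2 * FreeAlgebra.ι K 3))
  | r23 : AmbRel K a b p₁ p₂ (FreeAlgebra.ι K 1 * FreeAlgebra.ι K 2)
      ((p₁ * b⁻¹) • (FreeAlgebra.ι K 2 * FreeAlgebra.ι K 1))
  | r24 : AmbRel K a b p₁ p₂ (FreeAlgebra.ι K 1 * FreeAlgebra.ι K 3)
      (p₂ • (FreeAlgebra.ι K 3 * FreeAlgebra.ι K 1) +
        (1 - p₂ * a * b) • (FreeAlgebra.ι K 0 * FreeAlgebra.ι K 2))

/-- Jordan's ambiskew polynomial ring `R(a,b,p₁,p₂)`. -/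
abbrev Ambiskew (K : Type*) [Field K] (a b p₁ p₂ : K) := RingQuot (AmbRel K a b p₁ p₂)

/-- The images of the four free generators in `R(a,b,p₁,p₂)`;
`agen K a b p₁ p₂ i` is the generator `x_{i+1}`. -/
noncomputable def agen (K : Type*) [Field K] (a b p₁ p₂ : K) (i : Fin 4) :
    Ambiskew K a b p₁ p₂ :=
  RingQuot.mkAlgHom K (AmbRel K a b p₁ p₂) (FreeAlgebra.ι K i)


section Helpers

variable {K : Type*} [Field K]

/-- The six relations (with `p₂ = 1`) for a quadruple of elements. -/
def SatRel {S : Type*} [Ring S] [Algebra K S] (a b p : K) (g : Fin 4 → S) : Prop :=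
  g 3 * g 0 = a • (g 0 * g 3) ∧ g 1 * g 0 = (p⁻¹ * a⁻¹) • (g 0 * g 1) ∧
  g 0 * g 2 = p • (g 2 * g 0) ∧ g 3 * g 2 = b • (g 2 * g 3) ∧
  g 1 * g 2 = (p * b⁻¹) • (g 2 * g 1) ∧
  g 1 * g 3 = g 3 * g 1 + (1 - a * b) • (g 0 * g 2)

theorem satRel_agen (a b p : K) : SatRel a b p (agen K a b p 1) := by
  have key : ∀ {x y}, AmbRel K a b p 1 x y →
      RingQuot.mkAlgHom K (AmbRel K a b p 1) x = RingQuot.mkAlgHom K (AmbRel K a b p 1) y :=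
    fun h => RingQuot.mkAlgHom_rel K h
  refine ⟨?_, ?_, ?_, ?_, ?_, ?_⟩
  · simpa [agen] using key AmbRel.r41
  · simpa only [agen, map_mul, map_smul] using key AmbRel.r21
  · simpa only [agen, map_mul, map_smul] using key AmbRel.r13
  · simpa only [agen, map_mul, map_smul] using key AmbRel.r43
  · simpa only [agen, map_mul, map_smul] using key AmbRel.r23
  · simpa only [agen, map_mul, map_smul, map_add, one_smul, one_mul] using key AmbRel.r24

theorem SatRel.map {S T : Type*} [Ring S] [Algebra K S] [Ring T] [Algebra K T] {a b p : K}
    {g : Fin 4 → S} (h : SatRel a b p g) (f : S →ₐ[K] T) : SatRel a b p (fun i => f (g i)) := by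
  obtain ⟨h1, h2, h3, h4, h5, h6⟩ := h
  refine ⟨?_, ?_, ?_, ?_, ?_, ?_⟩
  · simpa only [map_mul, map_smul] using congrArg f h1
  · simpa only [map_mul, map_smul] using congrArg f h2
  · simpa only [map_mul, map_smul] using congrArg f h3
  · simpa only [map_mul, map_smul] using congrArg f h4
  · simpa only [map_mul, map_smul] using congrArg f h5
  · simpa only [map_mul, map_smul, map_add] using congrArg f h6

theorem exists_lift {S : Type*} [Ring S] [Algebra K S] {a b p : K} {g : Fin 4 → S}
    (h : SatRel a b p g) :
    ∃ f : Ambiskew K a b p 1 →ₐ[K] S, ∀ i, f (agen K a b p 1 i) = g i := by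
  obtain ⟨h1, h2, h3, h4, h5, h6⟩ := h
  refine ⟨RingQuot.liftAlgHom K ⟨FreeAlgebra.lift K g, ?_⟩, ?_⟩
  · intro x y hxy
    cases hxy
    · simpa only [map_mul, map_smul, FreeAlgebra.lift_ι_apply] using h1
    · simpa only [map_mul, map_smul, FreeAlgebra.lift_ι_apply] using h2
    · simpa only [map_mul, map_smul, FreeAlgebra.lift_ι_apply] using h3
    · simpa only [map_mul, map_smul, FreeAlgebra.lift_ι_apply] using h4
    · simpa only [map_mul, map_smul, FreeAlgebra.lift_ι_apply] using h5
    · simpa only [map_mul, map_smul, map_add, FreeAlgebra.lift_ι_apply, one_smul, one_mul] using h6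
  · intro i
    simp [agen, RingQuot.liftAlgHom_mkAlgHom_apply]

theorem amb_hom_ext {S : Type*} [Ring S] [Algebra K S] {a b p : K}
    {f g : Ambiskew K a b p 1 →ₐ[K] S}
    (h : ∀ i, f (agen K a b p 1 i) = g (agen K a b p 1 i)) : f = g := by
  apply RingQuot.ringQuot_ext'
  apply FreeAlgebra.hom_ext
  funext i
  exact h i

theorem amb_induction {a b p : K} (P : Ambiskew K a b p 1 → Prop)
    (hs : ∀ r, P (algebraMap K _ r)) (hg : ∀ i, P (agen K a b p 1 i))
    (hm : ∀ x y, P x → P y → P (x * y)) (ha : ∀ x y, P x → P y → P (x + y)) (z) : P z := by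
  obtain ⟨f, rfl⟩ := RingQuot.mkAlgHom_surjective K (AmbRel K a b p 1) z
  induction f using FreeAlgebra.induction with
  | grade0 r => simpa using hs r
  | grade1 i => exact hg i
  | mul x y hx hy => simpa using hm _ _ hx hy
  | add x y hx hy => simpa using ha _ _ hx hy

/-- The truncated algebra attached to a bilinear form, as block triangular matrices. -/
def tmat (β : Fin 4 → Fin 4 → K) (s : K) (v : Fin 4 → K) (w : K) : Matrix (Fin 6) (Fin 6) K :=
  !![s, v 0, v 1, v 2, v 3, w;
     0, s, 0, 0, 0, ∑ j, β 0 j * v j;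
     0, 0, s, 0, 0, ∑ j, β 1 j * v j;
     0, 0, 0, s, 0, ∑ j, β 2 j * v j;
     0, 0, 0, 0, s, ∑ j, β 3 j * v j;
     0, 0, 0, 0, 0, s]

/-- The bilinear form. -/
def bil (β : Fin 4 → Fin 4 → K) (v w : Fin 4 → K) : K := ∑ i, ∑ j, v i * β i j * w j

set_option maxHeartbeats 2000000 in
theorem tmat_mul (β : Fin 4 → Fin 4 → K) (s s' : K) (v v' : Fin 4 → K) (w w' : K) :
    tmat β s v w * tmat β s' v' w' =
      tmat β (s * s') (s • v' + s' • v) (s * w' + bil β v v' + w * s') := by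
  ext i j
  fin_cases i <;> fin_cases j <;>
    simp [tmat, bil, Matrix.mul_apply, Fin.sum_univ_succ] <;> ring

set_option maxHeartbeats 2000000 in
theorem tmat_add (β : Fin 4 → Fin 4 → K) (s s' : K) (v v' : Fin 4 → K) (w w' : K) :
    tmat β s v w + tmat β s' v' w' = tmat β (s + s') (v + v') (w + w') := by
  ext i j
  fin_cases i <;> fin_cases j <;>
    simp [tmat, Fin.sum_univ_succ] <;> ring

set_option maxHeartbeats 2000000 in
theorem tmat_smul (β : Fin 4 → Fin 4 → K) (r s : K) (v : Fin 4 → K) (w : K) :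
    r • tmat β s v w = tmat β (r * s) (r • v) (r * w) := by
  ext i j
  fin_cases i <;> fin_cases j <;>
    simp [tmat, Fin.sum_univ_succ] <;> ring

set_option maxHeartbeats 2000000 in
theorem tmat_one (β : Fin 4 → Fin 4 → K) : tmat β 1 0 0 = 1 := by
  ext i j
  fin_cases i <;> fin_cases j <;> simp [tmat]

theorem tmat_inj_w {β : Fin 4 → Fin 4 → K} {s s' : K} {v v' : Fin 4 → K} {w w' : K}
    (h : tmat β s v w = tmat β s' v' w') : w = w' := by
  have := congrFun (congrFun h 0) 5
  simpa [tmat] using this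

theorem bil_single (β : Fin 4 → Fin 4 → K) (i j : Fin 4) :
    bil β (Pi.single i 1) (Pi.single j 1) = β i j := by
  simp [bil, Pi.single_apply]

/-- The condition that a bilinear form kills the relations, on vectors `v i`. -/
def Kills (a b p : K) (f : Fin 4 → Fin 4 → K) : Prop :=
  f 3 0 = a * f 0 3 ∧ f 1 0 = (p⁻¹ * a⁻¹) * f 0 1 ∧ f 0 2 = p * f 2 0 ∧
  f 3 2 = b * f 2 3 ∧ f 1 2 = (p * b⁻¹) * f 2 1 ∧ f 1 3 = f 3 1 + (1 - a * b) * f 0 2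

theorem satRel_tmat {a b p : K} {β : Fin 4 → Fin 4 → K} {v : Fin 4 → Fin 4 → K} {w : Fin 4 → K} :
    SatRel a b p (fun i => tmat β 0 (v i) (w i)) ↔ Kills a b p (fun i j => bil β (v i) (v j)) := by
  simp only [SatRel, tmat_mul, tmat_smul, tmat_add]
  constructor
  · rintro ⟨h1, h2, h3, h4, h5, h6⟩
    refine ⟨?_, ?_, ?_, ?_, ?_, ?_⟩
    · simpa using tmat_inj_w h1
    · simpa using tmat_inj_w h2
    · simpa using tmat_inj_w h3
    · simpa using tmat_inj_w h4
    · simpa using tmat_inj_w h5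
    · simpa using tmat_inj_w h6
  · rintro ⟨h1, h2, h3, h4, h5, h6⟩
    simp only at h1 h2 h3 h4 h5 h6
    simp [h1, h2, h3, h4, h5, h6]

/-- The first order part of an isomorphism. -/
theorem exists_linear_part {a b p c d q : K} (ha : a ≠ 1) (hpb : p * b⁻¹ ≠ 1)
    (φ : Ambiskew K a b p 1 ≃ₐ[K] Ambiskew K c d q 1) :
    ∃ L : Matrix (Fin 4) (Fin 4) K, L.det ≠ 0 ∧
      ∀ β : Fin 4 → Fin 4 → K, Kills c d q β → Kills a b p (fun i j => bil β (L i) (L j)) := by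
  have hsat : SatRel c d q (fun i : Fin 4 =>
      (TrivSqZeroExt.inr (Pi.single i 1) : TrivSqZeroExt K (Fin 4 → K))) := by
    simp [SatRel, TrivSqZeroExt.inr_mul_inr]
  obtain ⟨h, hh⟩ := exists_lift hsat
  set L : Matrix (Fin 4) (Fin 4) K := fun i => (h (φ (agen K a b p 1 i))).snd with hL
  have hdet : L.det ≠ 0 := by
    intro h0
    obtain ⟨t, ht0, ht⟩ := Matrix.exists_mulVec_eq_zero_iff.2 h0
    apply ht0
    let ℓ : (Fin 4 → K) →ₗ[K] K := ∑ i, t i • LinearMap.proj i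
    let f1 : Ambiskew K c d q 1 →ₐ[K] TrivSqZeroExt K K := (TrivSqZeroExt.map ℓ).comp h
    let f2 : Ambiskew K c d q 1 →ₐ[K] TrivSqZeroExt K K :=
      (TrivSqZeroExt.map (0 : (Fin 4 → K) →ₗ[K] K)).comp h
    have e : f1.comp φ.toAlgHom = f2.comp φ.toAlgHom := by
      apply amb_hom_ext
      intro i
      have := congrFun ht i
      ext
      · simp [f1, f2]
      · simp only [Matrix.mulVec, dotProduct, hL, Pi.zero_apply] at this
        simp [f1, f2, ℓ]
        simpa [mul_comm] using this
    have e2 : f1 = f2 := by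
      apply AlgHom.ext
      intro z
      have := DFunLike.congr_fun e (φ.symm z)
      simpa using this
    funext i
    have := congrArg TrivSqZeroExt.snd (DFunLike.congr_fun e2 (agen K c d q 1 i))
    simpa [f1, f2, hh, ℓ, Pi.single_apply] using this
  have hrow : ∀ x : Fin 4 → K, Matrix.vecMul x L = 0 → x = 0 :=
    fun x hx => Matrix.eq_zero_of_vecMul_eq_zero hdet hx
  have hsA := ((satRel_agen a b p).map φ.toAlgHom).map h
  have hv : ∀ i, (h (φ (agen K a b p 1 i))).fst = 0 := by
    set v : Fin 4 → K := fun i => (h (φ (agen K a b p 1 i))).fst with hvdef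
    obtain ⟨h1, -, -, -, h5, -⟩ := hsA
    have h1' := congrArg TrivSqZeroExt.snd h1
    have h5' := congrArg TrivSqZeroExt.snd h5
    simp only [TrivSqZeroExt.snd_mul, TrivSqZeroExt.snd_smul] at h1' h5'
    change v 3 • L 0 + MulOpposite.op (v 0) • L 3 =
      a • (v 0 • L 3 + MulOpposite.op (v 3) • L 0) at h1'
    change v 1 • L 2 + MulOpposite.op (v 2) • L 1 =
      (p * b⁻¹) • (v 2 • L 1 + MulOpposite.op (v 1) • L 2) at h5'
    simp only [op_smul_eq_smul] at h1' h5'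
    have z1 := hrow ![(1 - a) * v 3, 0, 0, (1 - a) * v 0] (by
      funext j
      have := congrFun h1' j
      simp [Matrix.vecMul, dotProduct, Fin.sum_univ_succ] at this ⊢
      linear_combination this)
    have z5 := hrow ![0, (1 - p * b⁻¹) * v 2, (1 - p * b⁻¹) * v 1, 0] (by
      funext j
      have := congrFun h5' j
      simp [Matrix.vecMul, dotProduct, Fin.sum_univ_succ] at this ⊢
      linear_combination this)
    have ha' : 1 - a ≠ 0 := sub_ne_zero.2 ha.symm
    have hb' : 1 - p * b⁻¹ ≠ 0 := sub_ne_zero.2 hpb.symm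
    have y3 := congrFun z1 0
    have y0 := congrFun z1 3
    have y2 := congrFun z5 1
    have y1 := congrFun z5 2
    simp only [Matrix.cons_val, Pi.zero_apply, mul_eq_zero, ha', hb', false_or] at y0 y1 y2 y3
    intro i
    fin_cases i
    exacts [y0, y1, y2, y3]
  refine ⟨L, hdet, fun β hβ => ?_⟩
  have hs : SatRel c d q (fun i : Fin 4 => tmat β 0 (Pi.single i 1) 0) := by
    refine (satRel_tmat (v := fun i => Pi.single i 1) (w := fun _ => 0)).2 ?_
    simpa only [bil_single] using hβ
  obtain ⟨ρ, hρ⟩ := exists_lift hs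
  have hform : ∀ z, ∃ w, ρ z = tmat β (h z).fst (h z).snd w := by
    intro z
    induction z using amb_induction with
    | hs r =>
      refine ⟨0, ?_⟩
      rw [AlgHom.commutes, AlgHom.commutes, Algebra.algebraMap_eq_smul_one, ← tmat_one β, tmat_smul]
      simp [TrivSqZeroExt.algebraMap_eq_inl]
    | hg i => exact ⟨0, by simp [hρ, hh]⟩
    | hm x y hx hy =>
      obtain ⟨w, hw⟩ := hx
      obtain ⟨w', hw'⟩ := hy
      exact ⟨_, by rw [map_mul, map_mul, hw, hw', tmat_mul]; simp [op_smul_eq_smul]; rfl⟩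
    | ha x y hx hy =>
      obtain ⟨w, hw⟩ := hx
      obtain ⟨w', hw'⟩ := hy
      exact ⟨_, by rw [map_add, map_add, hw, hw', tmat_add]; simp; rfl⟩
  choose w hw using fun i => hform (φ (agen K a b p 1 i))
  have hsB := ((satRel_agen a b p).map φ.toAlgHom).map ρ
  have e : (fun i => ρ (φ.toAlgHom (agen K a b p 1 i))) = fun i => tmat β 0 (L i) (w i) := by
    funext i
    have := hw i
    rw [hv i] at this
    exact this
  rw [e] at hsB
  exact satRel_tmat.1 hsB

set_option maxHeartbeats 2000000 in
/-- The linear algebra. -/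
theorem linear_classification {a b p c d q : K} (ha : a ≠ 1) (hb : b ≠ 1) (hp : p ≠ 1)
    (hpa : p⁻¹ * a⁻¹ ≠ 1) (hpb : p * b⁻¹ ≠ 1) (hq : q ≠ 0)
    (L : Matrix (Fin 4) (Fin 4) K) (hdet : L.det ≠ 0)
    (hL : ∀ β : Fin 4 → Fin 4 → K, Kills c d q β → Kills a b p (fun i j => bil β (L i) (L j))) :
    (a = c ∧ b = d ∧ p = q) ∨ (a = q⁻¹ * c⁻¹ ∧ b = q * d⁻¹ ∧ p = q) ∨
    (a = d ∧ b = c ∧ p = q⁻¹) ∨ (a = q * d⁻¹ ∧ b = q⁻¹ * c⁻¹ ∧ p = q⁻¹) := by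
  have hrow : ∀ x : Fin 4 → K, Matrix.vecMul x L = 0 → x = 0 :=
    fun x hx => Matrix.eq_zero_of_vecMul_eq_zero hdet hx
  have hcol : ∀ x : Fin 4 → K, L.mulVec x = 0 → x = 0 :=
    fun x hx => Matrix.eq_zero_of_mulVec_eq_zero hdet hx
  have canc : ∀ {r x y : K}, r ≠ 1 → y = r * x → x = y → x = 0 := by
    intro r x y hr h1 h2
    have : (r - 1) * x = 0 := by rw [← h2] at h1; linear_combination -h1
    exact (mul_eq_zero.1 this).resolve_left (sub_ne_zero.2 hr)
  -- symmetric forms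
  have hsym : ∀ β : Fin 4 → Fin 4 → K, Kills c d q β → (∀ i j, β i j = β j i) →
      bil β (L 0) (L 3) = 0 ∧ bil β (L 0) (L 1) = 0 ∧ bil β (L 0) (L 2) = 0 ∧
      bil β (L 2) (L 3) = 0 ∧ bil β (L 2) (L 1) = 0 := by
    intro β hβ hs
    obtain ⟨h1, h2, h3, h4, h5, -⟩ := hL β hβ
    have hs' : ∀ v w, bil β v w = bil β w v := by
      intro v w
      unfold bil
      rw [Finset.sum_comm]
      refine Finset.sum_congr rfl fun i _ => Finset.sum_congr rfl fun j _ => ?_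
      rw [hs j i]; ring
    refine ⟨canc ha h1 (hs' _ _), canc hpa h2 (hs' _ _), ?_, canc hb h4 (hs' _ _),
      canc hpb h5 (hs' _ _)⟩
    rw [hs']
    exact canc hp h3 (hs' _ _)
  have hdiag : ∀ k, L 0 k * L 3 k = 0 ∧ L 0 k * L 1 k = 0 ∧ L 0 k * L 2 k = 0 ∧
      L 2 k * L 3 k = 0 ∧ L 2 k * L 1 k = 0 := by
    intro k
    have := hsym (fun i j => if i = k ∧ j = k then 1 else 0)
      (by fin_cases k <;> simp [Kills]) (by intro i j; simp [and_comm])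
    simpa [bil, ite_and] using this
  have hpol := hsym ![![0, 0, 0, 0], ![0, 0, 0, 1], ![0, 0, 0, 0], ![0, 1, 0, 0]]
      (by simp [Kills]) (by intro i j; fin_cases i <;> fin_cases j <;> rfl)
  simp [bil, Fin.sum_univ_four] at hpol
  obtain ⟨q03, q01, q02, q23, q21⟩ := hpol
  have hkill : ∀ r k l : Fin 4, k ≠ l → (∀ i, i ≠ r → L r k * L i k = 0) →
      (∀ i, i ≠ r → L r k * L i l + L r l * L i k = 0) → L r k = 0 := by
    intro r k l hkl h1 h2
    by_contra hne
    have hk : ∀ i, i ≠ r → L i k = 0 := fun i hi => (mul_eq_zero.1 (h1 i hi)).resolve_left hne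
    have hl : ∀ i, i ≠ r → L i l = 0 := by
      intro i hi
      have := h2 i hi
      rw [hk i hi, mul_zero, add_zero] at this
      exact (mul_eq_zero.1 this).resolve_left hne
    have := hcol (Pi.single k (L r l) - Pi.single l (L r k)) (by
      funext i
      rw [Matrix.mulVec_sub]
      simp only [Matrix.mulVec_single, Pi.sub_apply, Pi.smul_apply, Matrix.col_apply,
        Pi.zero_apply, MulOpposite.smul_eq_mul_unop, MulOpposite.unop_op]
      by_cases hi : i = r
      · subst hi; ring
      · rw [hk i hi, hl i hi]; ring)
    have := congrFun this l
    simp [Pi.single_apply, hkl.symm] at this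
    exact hne this
  have z01 : L 0 1 = 0 := by
    refine hkill 0 1 3 (by decide) ?_ ?_ <;> intro i hi <;> fin_cases i <;> simp at hi ⊢ <;>
      have := hdiag 1 <;> grind
  have z03 : L 0 3 = 0 := by
    refine hkill 0 3 1 (by decide) ?_ ?_ <;> intro i hi <;> fin_cases i <;> simp at hi ⊢ <;>
      have := hdiag 3 <;> grind
  have z21 : L 2 1 = 0 := by
    refine hkill 2 1 3 (by decide) ?_ ?_ <;> intro i hi <;> fin_cases i <;> simp at hi ⊢ <;>
      have := hdiag 1 <;> grind
  have z23 : L 2 3 = 0 := by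
    refine hkill 2 3 1 (by decide) ?_ ?_ <;> intro i hi <;> fin_cases i <;> simp at hi ⊢ <;>
      have := hdiag 3 <;> grind
  -- rows are nonzero
  have hrow0 : ∀ i, (∀ k, L i k = 0) → False := by
    intro i hi
    have := congrFun (hrow (Pi.single i 1) (by funext k; simp [hi])) i
    simp at this
  -- quadratic forms
  have f01 := hL ![![0, 1, 0, 0], ![q⁻¹ * c⁻¹, 0, 0, 0], ![0, 0, 0, 0], ![0, 0, 0, 0]]
    (by simp [Kills])
  have f03 := hL ![![0, 0, 0, 1], ![0, 0, 0, 0], ![0, 0, 0, 0], ![c, 0, 0, 0]]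
    (by simp [Kills])
  have f21 := hL ![![0, 0, 0, 0], ![0, 0, q * d⁻¹, 0], ![0, 1, 0, 0], ![0, 0, 0, 0]]
    (by simp [Kills])
  have f23 := hL ![![0, 0, 0, 0], ![0, 0, 0, 0], ![0, 0, 0, 1], ![0, 0, d, 0]]
    (by simp [Kills])
  have f02 := hL ![![0, 0, q, 0], ![0, 0, 0, (1 - c * d) * q], ![1, 0, 0, 0], ![0, 0, 0, 0]]
    (by simp [Kills])
  replace f01 := And.intro f01.1 f01.2.2.2.1
  replace f03 := And.intro f03.1 f03.2.2.2.1
  replace f21 := And.intro f21.1 f21.2.2.2.1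
  replace f23 := And.intro f23.1 f23.2.2.2.1
  replace f02 := f02.2.2.1
  simp [bil, Fin.sum_univ_four, z01, z03, z21, z23] at f01 f03 f21 f23 f02
  have d0 := hdiag 0
  have d2 := hdiag 2
  have hne : L 0 0 ≠ 0 ∨ L 2 0 ≠ 0 := by
    by_contra! hcon
    have := hrow ![L 2 2, 0, - L 0 2, 0] (by
      funext k
      fin_cases k <;> simp [Matrix.vecMul, dotProduct, Fin.sum_univ_four, hcon, z01, z03, z21, z23]
      ring)
    have h02 := congrFun this 2
    simp at h02
    exact hrow0 0 (by intro k; fin_cases k <;> simp [hcon, z01, z03, h02])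
  have hst : L 3 0 = 0 → L 3 2 = 0 → L 3 1 ≠ 0 ∨ L 3 3 ≠ 0 := by
    intro h0 h2
    by_contra! hcon
    exact hrow0 3 (by intro k; fin_cases k <;> simp [hcon, h0, h2])
  have fin : ∀ {x y r s : K}, x ≠ 0 → y ≠ 0 → r * (x * y) = s * (x * y) → r = s :=
    fun hx hy h => mul_right_cancel₀ (mul_ne_zero hx hy) h
  rcases hne with hne | hne
  · have e2 : L 2 0 = 0 := by grind
    have e3 : L 3 0 = 0 := by grind
    have hne2 : L 2 2 ≠ 0 := fun h =>
      hrow0 2 (by intro k; fin_cases k <;> simp [e2, z21, z23, h])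
    have e0 : L 0 2 = 0 := by grind
    have e4 : L 3 2 = 0 := by grind
    simp [e2, e3, e0, e4] at f01 f03 f21 f23 f02
    have hp' : p = q := by grind
    rcases hst e3 e4 with hs | hs
    · right; left
      exact ⟨fin hne hs (by linear_combination -f01),
        fin hne2 hs (by linear_combination -f21), hp'⟩
    · left
      exact ⟨fin hne hs (by linear_combination -f03),
        fin hne2 hs (by linear_combination -f23), hp'⟩
  · have e2 : L 0 0 = 0 := by grind
    have e3 : L 3 0 = 0 := by grind
    have hne2 : L 0 2 ≠ 0 := fun h =>
      hrow0 0 (by intro k; fin_cases k <;> simp [e2, z01, z03, h])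
    have e0 : L 2 2 = 0 := by grind
    have e4 : L 3 2 = 0 := by grind
    simp [e2, e3, e0, e4] at f01 f03 f21 f23 f02
    have hp' : p = q⁻¹ := by
      apply eq_inv_of_mul_eq_one_left
      grind
    rcases hst e3 e4 with hs | hs
    · right; right; right
      exact ⟨fin hne2 hs (by linear_combination -f21),
        fin hne hs (by linear_combination -f01), hp'⟩
    · right; right; left
      exact ⟨fin hne2 hs (by linear_combination -f23),
        fin hne hs (by linear_combination -f03), hp'⟩

end Helpers

/-- under genericity hypotheses on the parameters, an isomorphism
`R(a,b,p,1) ≅ R(c,d,q,1)` forces `(a,b,p)` to be one of `(c,d,q)`,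
`(q⁻¹c⁻¹, qd⁻¹, q)`, `(d, c, q⁻¹)`, `(qd⁻¹, q⁻¹c⁻¹, q⁻¹)`. -/
theorem ambiskew_iso_classification (K : Type*) [Field K] (a b p c d q : Kˣ)
    (ha : (a : K) ≠ 1) (hb : (b : K) ≠ 1) (hab : (a : K) * (b : K) ≠ 1)
    (hp2 : (p : K) ^ 2 ≠ 1) (hpa : (p : K) * (a : K) ≠ 1)
    (hpb : (p : K) * (b : K)⁻¹ ≠ 1) (hpa2 : (p : K) * (a : K) ^ 2 ≠ 1)
    (hpb2 : (p : K)⁻¹ * (b : K) ^ 2 ≠ 1)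
    (hc : (c : K) ≠ 1) (hd : (d : K) ≠ 1) (hcd : (c : K) * (d : K) ≠ 1)
    (hq2 : (q : K) ^ 2 ≠ 1) (hqc : (q : K) * (c : K) ≠ 1)
    (hqd : (q : K) * (d : K)⁻¹ ≠ 1) (hqc2 : (q : K) * (c : K) ^ 2 ≠ 1)
    (hqd2 : (q : K)⁻¹ * (d : K) ^ 2 ≠ 1)
    (h : Nonempty (Ambiskew K (a : K) (b : K) (p : K) 1 ≃ₐ[K]
      Ambiskew K (c : K) (d : K) (q : K) 1)) :
    (a = c ∧ b = d ∧ p = q) ∨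
    (a = q⁻¹ * c⁻¹ ∧ b = q * d⁻¹ ∧ p = q) ∨
    (a = d ∧ b = c ∧ p = q⁻¹) ∨
    (a = q * d⁻¹ ∧ b = q⁻¹ * c⁻¹ ∧ p = q⁻¹) := by
  obtain ⟨φ⟩ := h
  obtain ⟨L, hdet, hL⟩ := exists_linear_part ha hpb φ
  have hp : (p : K) ≠ 1 := fun h => hp2 (by rw [h, one_pow])
  have hpa' : (p : K)⁻¹ * (a : K)⁻¹ ≠ 1 := by
    rw [← mul_inv]
    exact fun h => hpa (inv_eq_one.1 h)
  have := linear_classification ha hb hp hpa' hpb q.ne_zero L hdet hL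
  simpa only [Units.ext_iff, Units.val_mul, Units.val_inv_eq_inv_val] using this
end

section
/- Let K be a field of characteristic 0 and let p, q ∈ Kˣ. The quantum Weyl algebras A_1^p(K) and A_1^q(K) are isomorphic as K-algebras if and only if p = q or p = q⁻¹. -/
/-- The defining relation of the quantum Weyl algebra `A_1^q(K)`:
`x * y = q • (y * x) + 1`, where `x, y` are the two free generators. -/
inductive WeylRel (K : Type*) [Field K] (q : K) :
    FreeAlgebra K (Fin 2) → FreeAlgebra K (Fin 2) → Prop
  | rel : WeylRel K q (FreeAlgebra.ι K 0 * FreeAlgebra.ι K 1)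
      (q • (FreeAlgebra.ι K 1 * FreeAlgebra.ι K 0) + 1)

/-- The quantum Weyl algebra `A_1^q(K)`. -/
abbrev QuantumWeyl (K : Type*) [Field K] (q : K) := RingQuot (WeylRel K q)

open LaurentPolynomial in
/-- units of Laurent polynomials over a field are monomials -/
theorem laurent_unit {K : Type*} [Field K] (f g : LaurentPolynomial K) (h : f * g = 1) :
    ∃ (a : K) (n : ℤ), a ≠ 0 ∧ f = C a * T n := by
  obtain ⟨m, f', hf⟩ := f.exists_T_pow
  obtain ⟨k, g', hg⟩ := g.exists_T_pow
  have h1 : f' * g' = Polynomial.X ^ (m + k) := by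
    apply Polynomial.toLaurent_injective
    rw [map_mul, hf, hg, Polynomial.toLaurent_X_pow]
    push_cast
    rw [T_add]
    linear_combination (T (m : ℤ) * T (k : ℤ)) * h
  have h2 : f' ∣ Polynomial.X ^ (m + k) := ⟨g', h1.symm⟩
  obtain ⟨i, -, hi⟩ := (dvd_prime_pow Polynomial.prime_X _).1 h2
  obtain ⟨u, hu⟩ := hi.symm
  obtain ⟨a, ha, hau⟩ := Polynomial.isUnit_iff.1 u.isUnit
  refine ⟨a, (i : ℤ) - m, ha.ne_zero, ?_⟩
  have h3 : f = (f * T (m : ℤ)) * T (-(m : ℤ)) := by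
    rw [mul_T_assoc]; simp
  rw [h3, ← hf, ← hu, ← hau, map_mul, Polynomial.toLaurent_X_pow, Polynomial.toLaurent_C, T_sub]
  ring

namespace QW

variable {K : Type*} [Field K]

/-- generator x -/
noncomputable def gx (q : K) : QuantumWeyl K q :=
  RingQuot.mkAlgHom K (WeylRel K q) (FreeAlgebra.ι K 0)

/-- generator y -/
noncomputable def gy (q : K) : QuantumWeyl K q :=
  RingQuot.mkAlgHom K (WeylRel K q) (FreeAlgebra.ι K 1)

theorem rel (q : K) : gx q * gy q = q • (gy q * gx q) + 1 := by
  have := RingQuot.mkAlgHom_rel K (WeylRel.rel (K := K) (q := q))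
  simpa [gx, gy] using this

/-- universal property -/
noncomputable def lift (q : K) {R : Type*} [Ring R] [Algebra K R] (X Y : R)
    (h : X * Y = q • (Y * X) + 1) : QuantumWeyl K q →ₐ[K] R :=
  RingQuot.liftAlgHom K ⟨FreeAlgebra.lift K ![X, Y], by
    rintro _ _ ⟨⟩
    simpa using h⟩

@[simp] theorem lift_gx (q : K) {R : Type*} [Ring R] [Algebra K R] (X Y : R)
    (h : X * Y = q • (Y * X) + 1) : lift q X Y h (gx q) = X := by
  simp [lift, gx]

@[simp] theorem lift_gy (q : K) {R : Type*} [Ring R] [Algebra K R] (X Y : R)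
    (h : X * Y = q • (Y * X) + 1) : lift q X Y h (gy q) = Y := by
  simp [lift, gy]

theorem hom_ext {q : K} {R : Type*} [Ring R] [Algebra K R] (f g : QuantumWeyl K q →ₐ[K] R)
    (hx : f (gx q) = g (gx q)) (hy : f (gy q) = g (gy q)) : f = g := by
  apply RingQuot.ringQuot_ext'
  apply FreeAlgebra.hom_ext
  funext i
  fin_cases i
  · simpa [gx] using hx
  · simpa [gy] using hy

theorem mem_all {q : K} (S : Subalgebra K (QuantumWeyl K q)) (hx : gx q ∈ S) (hy : gy q ∈ S)
    (a : QuantumWeyl K q) : a ∈ S := by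
  let i : QuantumWeyl K q →ₐ[K] S := lift q (R := S) ⟨gx q, hx⟩ ⟨gy q, hy⟩ (by
    ext; simpa using rel q)
  have h : S.val.comp i = AlgHom.id K _ := by
    apply hom_ext <;> simp [i]
  have := congrArg (fun f => f a) h
  simp only [AlgHom.comp_apply, AlgHom.id_apply] at this
  rw [← this]
  exact (i a).2

theorem flip_rel (q : K) (h0 : q ≠ 0) {R : Type*} [Ring R] [Algebra K R] (X Y : R)
    (h : X * Y = q • (Y * X) + 1) : Y * (-q • X) = q⁻¹ • ((-q • X) * Y) + 1 := by
  simp only [mul_smul_comm, smul_mul_assoc, h, smul_add, smul_smul]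
  simp [h0]

theorem flip_rel' (q : K) (h0 : q ≠ 0) {R : Type*} [Ring R] [Algebra K R] (X Y : R)
    (h : X * Y = q • (Y * X) + 1) : (-q • Y) * X = q⁻¹ • (X * (-q • Y)) + 1 := by
  simp only [mul_smul_comm, smul_mul_assoc, h, smul_add, smul_smul]
  simp [h0]

theorem iso_inv (q : Kˣ) :
    Nonempty (QuantumWeyl K ((q⁻¹ : Kˣ) : K) ≃ₐ[K] QuantumWeyl K (q : K)) := by
  refine ⟨AlgEquiv.ofAlgHom
    (lift _ (gy (q : K)) (-(q : K) • gx (q : K)) ?_)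
    (lift _ (-(q : K)⁻¹ • gy ((q⁻¹ : Kˣ) : K)) (gx ((q⁻¹ : Kˣ) : K)) ?_) ?_ ?_⟩
  · rw [Units.val_inv_eq_inv_val]
    exact flip_rel _ q.ne_zero _ _ (rel (q : K))
  · have h := flip_rel' _ (q⁻¹).ne_zero _ _ (rel ((q⁻¹ : Kˣ) : K))
    simpa using h
  · apply hom_ext <;> simp [smul_smul]
  · apply hom_ext <;> simp [smul_smul]

open LaurentPolynomial

/-- The twist `t ↦ q⁻¹ t`. -/
noncomputable def tau (q : Kˣ) : LaurentPolynomial K →+* LaurentPolynomial K :=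
  eval₂ (C : K →+* LaurentPolynomial K)
    (Units.map (C : K →+* LaurentPolynomial K).toMonoidHom q⁻¹ * (isUnit_T 1).unit)

theorem unit_T_zpow (n : ℤ) :
    (((isUnit_T 1).unit ^ n : (LaurentPolynomial K)ˣ) : LaurentPolynomial K) = T n := by
  have h : ∀ k : ℕ, (((isUnit_T 1).unit ^ k : (LaurentPolynomial K)ˣ) : LaurentPolynomial K)
      = T (k : ℤ) := by
    intro k; simp
  obtain ⟨k, rfl | rfl⟩ := n.eq_nat_or_neg
  · rw [zpow_natCast, h]
  · rw [zpow_neg, zpow_natCast]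
    apply Units.inv_eq_of_mul_eq_one_right
    rw [h, ← T_add]; simp

theorem tau_mono (q : Kˣ) (a : K) (n : ℤ) :
    tau q (C a * T n) = C (a * ((q⁻¹ ^ n : Kˣ) : K)) * T n := by
  rw [tau, eval₂_C_mul_T, mul_zpow, Units.val_mul, unit_T_zpow, ← map_zpow, map_mul]
  rw [mul_assoc]
  rfl

theorem tau_C (q : Kˣ) (a : K) : tau q (C a) = C a := by
  rw [tau, eval₂_C]

/-- the character -/
noncomputable def chr (q : K) (hq : q ≠ 1) : QuantumWeyl K q →ₐ[K] LaurentPolynomial K :=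
  lift q (T 1) (C (-(q - 1)⁻¹) * T (-1)) (by
    have h : q - 1 ≠ 0 := sub_ne_zero.2 hq
    have e : (T 1 * T (-1) : LaurentPolynomial K) = 1 := by rw [← T_add]; simp
    have e2 : (C (-(q-1)⁻¹) : LaurentPolynomial K) = C q * C (-(q-1)⁻¹) + 1 := by
      rw [← map_mul, ← map_one C, ← map_add]; congr 1; field_simp; ring
    rw [smul_eq_C_mul]
    linear_combination (C (-(q-1)⁻¹) - C q * C (-(q-1)⁻¹)) * e + e2)

theorem CC (q : Kˣ) : (C (q : K) * C (q : K)⁻¹ : LaurentPolynomial K) = 1 := by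
  rw [← map_mul, ← map_one C]; simp

/-- the 2×2 representation -/
noncomputable def rho (q : Kˣ) (hq : (q : K) ≠ 1) :
    QuantumWeyl K (q : K) →ₐ[K] Matrix (Fin 2) (Fin 2) (LaurentPolynomial K) :=
  lift (q : K) !![T 1, 0; 0, C (q : K)⁻¹ * T 1]
    !![C (-((q : K) - 1)⁻¹) * T (-1), - C (-((q : K) - 1)⁻¹) * C (q : K) * T (-1);
      0, C (-((q : K) - 1)⁻¹) * C (q : K) * T (-1)] (by
    have h : (q : K) - 1 ≠ 0 := sub_ne_zero.2 hq
    have e : (T 1 * T (-1) : LaurentPolynomial K) = 1 := by rw [← T_add]; simp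
    have e2 : (C (-((q : K)-1)⁻¹) : LaurentPolynomial K) = C (q : K) * C (-((q : K)-1)⁻¹) + 1 := by
      rw [← map_mul, ← map_one C, ← map_add]; congr 1; field_simp; ring
    have e3 := CC q
    generalize (C (-((q : K)-1)⁻¹) : LaurentPolynomial K) = c at *
    generalize (C (q : K)⁻¹ : LaurentPolynomial K) = d at *
    ext1 i j
    fin_cases i <;> fin_cases j <;>
      simp [Matrix.mul_apply, Fin.sum_univ_two, smul_eq_C_mul, -neg_mul, -mul_neg]
    · linear_combination e2
    · linear_combination (C (q : K) * c * T 1 * T (-1)) * e3 + (C (q : K) * c) * e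
    · linear_combination (c - C (q : K) * c) * e + e2 +
        (c - C (q:K) * c) * T 1 * T (-1) * e3)

theorem rho_entries (q : Kˣ) (hq : (q : K) ≠ 1) (a : QuantumWeyl K (q : K)) :
    rho q hq a 0 0 = chr (q : K) hq a ∧ rho q hq a 1 0 = 0 ∧
      rho q hq a 1 1 = tau q (chr (q : K) hq a) := by
  let S : Subalgebra K (QuantumWeyl K (q : K)) :=
    { carrier := {a | rho q hq a 0 0 = chr (q : K) hq a ∧ rho q hq a 1 0 = 0 ∧
        rho q hq a 1 1 = tau q (chr (q : K) hq a)}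
      mul_mem' := by
        rintro a b ⟨h1, h2, h3⟩ ⟨h4, h5, h6⟩
        refine ⟨?_, ?_, ?_⟩ <;> simp [Matrix.mul_apply, Fin.sum_univ_two, *]
      add_mem' := by
        rintro a b ⟨h1, h2, h3⟩ ⟨h4, h5, h6⟩
        refine ⟨?_, ?_, ?_⟩ <;> simp [*]
      algebraMap_mem' := by
        intro r
        refine ⟨?_, ?_, ?_⟩ <;>
          simp [Matrix.algebraMap_matrix_apply]
        rw [tau_C] }
  refine mem_all S ⟨?_, ?_, ?_⟩ ⟨?_, ?_, ?_⟩ a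
  · simp [rho, chr]
  · simp [rho, chr]
  · have := tau_mono q 1 1
    simp only [map_one, one_mul] at this
    simp [rho, chr, this]
  · simp [rho, chr]
  · simp [rho, chr]
  · simp only [rho, chr, lift_gy]
    rw [tau_mono]
    simp

theorem comm_all {p : K} {R : Type*} [Ring R] [Algebra K R] (f : QuantumWeyl K p →ₐ[K] R)
    (h : f (gx p) * f (gy p) = f (gy p) * f (gx p)) (a b : QuantumWeyl K p) :
    f a * f b = f b * f a := by
  have h1 : ∀ a, a ∈ (Subalgebra.centralizer K {f (gx p), f (gy p)}).comap f := by
    apply mem_all <;> simp [Subalgebra.mem_centralizer_iff, h]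
  have h2 : ∀ a, a ∈ (Subalgebra.centralizer K (Set.range f)).comap f := by
    apply mem_all
    · simp only [Subalgebra.mem_comap, Subalgebra.mem_centralizer_iff]
      rintro _ ⟨a, rfl⟩
      have := h1 a
      simp only [Subalgebra.mem_comap, Subalgebra.mem_centralizer_iff] at this
      exact (this _ (by simp)).symm
    · simp only [Subalgebra.mem_comap, Subalgebra.mem_centralizer_iff]
      rintro _ ⟨a, rfl⟩
      have := h1 a
      simp only [Subalgebra.mem_comap, Subalgebra.mem_centralizer_iff] at this
      exact (this _ (by simp)).symm
  have := h2 b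
  simp only [Subalgebra.mem_comap, Subalgebra.mem_centralizer_iff] at this
  exact this _ ⟨a, rfl⟩

theorem exponent {p : K} (F : QuantumWeyl K p →ₐ[K] LaurentPolynomial K)
    (hF : ∃ a, F a = T 1) (hp : 1 - p ≠ 0) (a : K) (n : ℤ) (ha : a ≠ 0)
    (hf : F (gx p) = C a * T n) : n = 1 ∨ n = -1 := by
  let G : LaurentPolynomial K →ₐ[K] AddMonoidAlgebra K (ZMod n.natAbs) :=
    AddMonoidAlgebra.mapDomainAlgHom K K (Int.castAddHom (ZMod n.natAbs))
  have hG : ∀ m : ℤ, G (T m) = AddMonoidAlgebra.single (m : ZMod n.natAbs) 1 := by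
    intro m
    exact AddMonoidAlgebra.mapDomain_single
  have hGn : G (T n) = 1 := by
    rw [hG]
    have : (n : ZMod n.natAbs) = 0 := by
      rw [ZMod.intCast_zmod_eq_zero_iff_dvd]; simp
    rw [this]; rfl
  have hx : G (F (gx p)) = algebraMap K _ a := by
    rw [hf, map_mul, hGn, mul_one, C_eq_algebraMap, AlgHom.commutes]
  have hy : G (F (gy p)) = algebraMap K _ ((1 - p)⁻¹ * a⁻¹) := by
    have h := congrArg (fun z => G (F z)) (rel p)
    simp only [map_mul, map_add, map_smul, map_one, hx] at h
    rw [Algebra.smul_def] at h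
    have e : algebraMap K (AddMonoidAlgebra K (ZMod n.natAbs)) ((1 - p)⁻¹ * a⁻¹) *
        algebraMap K _ (a * (1 - p)) = 1 := by
      rw [← map_mul]
      have : (1 - p)⁻¹ * a⁻¹ * (a * (1 - p)) = 1 := by field_simp
      rw [this, map_one]
    have e2 : algebraMap K (AddMonoidAlgebra K (ZMod n.natAbs)) (a * (1 - p)) =
      algebraMap K _ a * (1 - algebraMap K _ p) := by rw [map_mul, map_sub, map_one]
    rw [e2] at e
    linear_combination (-G (F (gy p))) * e +
      (algebraMap K (AddMonoidAlgebra K (ZMod n.natAbs)) ((1 - p)⁻¹ * a⁻¹)) * h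
  have hall : ∀ b, b ∈ (⊥ : Subalgebra K (AddMonoidAlgebra K (ZMod n.natAbs))).comap
      (G.comp F) := by
    apply mem_all
    · simp only [Subalgebra.mem_comap, AlgHom.comp_apply, hx]
      exact Subalgebra.algebraMap_mem _ _
    · simp only [Subalgebra.mem_comap, AlgHom.comp_apply, hy]
      exact Subalgebra.algebraMap_mem _ _
  obtain ⟨b, hb⟩ := hF
  have h1 := hall b
  rw [Subalgebra.mem_comap, AlgHom.comp_apply, hb, hG, Algebra.mem_bot] at h1
  obtain ⟨r, hr⟩ := h1
  have h2 : ((1 : ℤ) : ZMod n.natAbs) = 0 := by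
    by_contra hne
    have h3 := congrArg (fun z => z.coeff ((1 : ℤ) : ZMod n.natAbs)) hr
    simp [AddMonoidAlgebra.algebraMap_def, AddMonoidAlgebra.coeff_single] at h3
    rw [Finsupp.single_apply, if_neg (by intro h; apply hne; simp [← h])] at h3
    simp at h3
  rw [ZMod.intCast_zmod_eq_zero_iff_dvd] at h2
  have := Int.natAbs_dvd.1 h2
  exact Int.isUnit_iff.1 (isUnit_of_dvd_one this)

theorem main (p q : Kˣ) (hq : (q : K) ≠ 1)
    (φ : QuantumWeyl K (p : K) ≃ₐ[K] QuantumWeyl K (q : K)) : p = q ∨ p = q⁻¹ := by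
  let F : QuantumWeyl K (p : K) →ₐ[K] LaurentPolynomial K := (chr (q : K) hq).comp φ
  let Ψ : QuantumWeyl K (p : K) →ₐ[K] Matrix (Fin 2) (Fin 2) (LaurentPolynomial K) :=
    (rho q hq).comp φ
  have hΨ : ∀ a, Ψ a 0 0 = F a ∧ Ψ a 1 0 = 0 ∧ Ψ a 1 1 = tau q (F a) :=
    fun a => rho_entries q hq (φ a)
  have hrel := congrArg Ψ (rel (p : K))
  obtain ⟨x0, x1, x2⟩ := hΨ (gx (p : K))
  obtain ⟨y0, y1, y2⟩ := hΨ (gy (p : K))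
  have hrelF := congrArg F (rel (p : K))
  rw [map_mul, map_add, map_smul, map_mul, map_one, smul_eq_C_mul] at hrelF
  have hrelT := congrArg (tau q) hrelF
  rw [map_mul, map_add, map_mul, map_mul, map_one, tau_C] at hrelT
  rw [map_mul, map_add, map_smul, map_mul, map_one] at hrel
  have hrel01 := congrArg (fun M => M 0 1) hrel
  simp only [Matrix.mul_apply, Fin.sum_univ_two, Matrix.add_apply, Matrix.smul_apply,
    smul_eq_C_mul, x0, x2, y0, y2, Matrix.one_apply] at hrel01
  simp at hrel01
  have hnc : Ψ (gx (p : K)) * Ψ (gy (p : K)) ≠ Ψ (gy (p : K)) * Ψ (gx (p : K)) := by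
    intro h
    have h2 := comm_all Ψ h (φ.symm (gx (q : K))) (φ.symm (gy (q : K)))
    have h3 := congrArg (fun M => M 0 1) h2
    simp [Ψ, rho, Matrix.mul_apply, Fin.sum_univ_two] at h3
    have e : (T 1 * T (-1) : LaurentPolynomial K) = 1 := by rw [← T_add]; simp
    have e3 := CC q
    have h : (q : K) - 1 ≠ 0 := sub_ne_zero.2 hq
    have e2 : (C (-((q : K)-1)⁻¹) : LaurentPolynomial K) = C (q : K) * C (-((q : K)-1)⁻¹) + 1 := by
      rw [← map_mul, ← map_one C, ← map_add]; congr 1; field_simp; ring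
    rw [map_neg] at e2
    have : (1 : LaurentPolynomial K) = 0 := by
      generalize (C ((q : K)-1)⁻¹ : LaurentPolynomial K) = c at *
      generalize (C (q : K)⁻¹ : LaurentPolynomial K) = d at *
      linear_combination h3 + c * T 1 * T (-1) * e3 + c * e - e2
    exact one_ne_zero this
  have hh : Ψ (gx (p : K)) 0 1 * tau q (F (gy (p : K))) + F (gx (p : K)) * Ψ (gy (p : K)) 0 1
      - F (gy (p : K)) * Ψ (gx (p : K)) 0 1 - Ψ (gy (p : K)) 0 1 * tau q (F (gx (p : K))) ≠ 0 := by
    intro h0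
    apply hnc
    ext1 i j
    fin_cases i <;> fin_cases j <;>
      simp [Matrix.mul_apply, Fin.sum_univ_two, x0, x1, x2, y0, y1, y2]
    · ring
    · linear_combination h0
    · ring
  have key : F (gx (p : K)) = C (p : K) * tau q (F (gx (p : K))) := by
    apply mul_right_cancel₀ hh
    generalize tau q (F (gx (p : K))) = tf at *
    generalize tau q (F (gy (p : K))) = tg at *
    generalize F (gx (p : K)) = f at *
    generalize F (gy (p : K)) = g at *
    generalize Ψ (gx (p : K)) 0 1 = u at *
    generalize Ψ (gy (p : K)) 0 1 = v at *
    linear_combination (f - tf) * hrel01 - u * hrelF + u * hrelT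
  have hp1 : 1 - (p : K) ≠ 0 := by
    intro h
    have : (p : K) = 1 := (sub_eq_zero.1 h).symm
    have hC : (C (p : K) : LaurentPolynomial K) = 1 := by rw [this, map_one]
    rw [hC, one_mul, mul_comm] at hrelF
    simp at hrelF
  obtain ⟨a, n, ha, hf⟩ := laurent_unit (F (gx (p : K))) (F (gy (p : K)) * (1 - C (p : K))) (by
    linear_combination hrelF)
  have hn := exponent F ⟨φ.symm (gx (q : K)), by simp [F, chr]⟩ hp1 a n ha hf
  rw [hf, tau_mono, ← mul_assoc, ← map_mul] at key
  have k2 := congrArg (fun z => z.coeff n) key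
  simp only [← single_eq_C_mul_T, AddMonoidAlgebra.coeff_single, Finsupp.single_eq_same] at k2
  have k3 : (1 : K) = ((p * q⁻¹ ^ n : Kˣ) : K) := by
    apply mul_left_cancel₀ ha
    push_cast
    push_cast at k2
    linear_combination k2
  have k4 : 1 = p * q⁻¹ ^ n := Units.ext (by simpa using k3)
  rcases hn with rfl | rfl
  · left
    simpa [eq_comm, mul_inv_eq_one] using k4
  · right
    simp at k4
    exact eq_inv_of_mul_eq_one_left k4.symm

end QW

/-- `A_1^p(K) ≅ A_1^q(K)` iff `p = q` or `p = q⁻¹`. -/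
theorem quantumWeyl_iso_iff (K : Type*) [Field K] [CharZero K] (p q : Kˣ) :
    Nonempty (QuantumWeyl K (p : K) ≃ₐ[K] QuantumWeyl K (q : K)) ↔ (p = q ∨ p = q⁻¹) := by
  constructor
  · rintro ⟨φ⟩
    by_cases hq : (q : K) = 1
    · by_cases hp : (p : K) = 1
      · left; exact Units.ext (hp.trans hq.symm)
      · rcases QW.main q p hp φ.symm with h | h
        · exact Or.inl h.symm
        · right; rw [h, inv_inv]
    · exact QW.main p q hq φ
  · rintro (rfl | rfl)
    · exact ⟨AlgEquiv.refl⟩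
    · exact QW.iso_inv q
end
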